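/- arXiv:2602.20529 — 6 statements merged into one kernel-verified Lean document; each statement's English description precedes it below -/
import Mathlib

section
/- Let K be a positive integer and let G ∈ ℝ^{K×K} be a diagonal matrix with all diagonal entries g_{ii} > 0 (as arises when G = (A Aᵀ) ∘ M with M diagonal positive). Define d ∈ ℝ^K by d_i = (∏_{k=1}^K g_{kk})^{1/(2K)} · g_{ii}^{-1/2}. Then all d_i > 0, ∏_{i=1}^K d_i = 1, and G d = c · (1 ⊘ d) with the positive constant c = (∏_{k=1}^K g_{kk})^{1/K}; in particular G d is proportional to 1 ⊘ d. -/
/-!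
Write `P = ∏ₖ gₖ`. Since `P > 0`, the real-power laws give `∏ᵢ dᵢ = P^{K/(2K)} · P^{-1/2} = 1`.
For the linear system, the `i`-th equation `gᵢ dᵢ = P^{1/K} / dᵢ` is equivalent to
`gᵢ dᵢ² = P^{1/K}`, which holds because `dᵢ² = P^{1/K} gᵢ⁻¹`.
-/

open Matrix

/-- Closed-form solution of the direction-optimality system when
`G = diag g` is diagonal with positive diagonal entries: the vector
`dᵢ = (∏ₖ gₖₖ)^{1/(2K)} gᵢᵢ^{-1/2}` is entrywise positive, has `∏ᵢ dᵢ = 1`, and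
satisfies `G d = c · (1 ⊘ d)` with `c = (∏ₖ gₖₖ)^{1/K} > 0`. -/
theorem diagonal_direction_optimality
    (K : ℕ) (hK : 0 < K) (g : Fin K → ℝ) (hg : ∀ i, 0 < g i)
    (d : Fin K → ℝ)
    (hd : d = fun i => (∏ k, g k) ^ ((1 : ℝ) / (2 * K)) * (g i) ^ (-(1 : ℝ) / 2)) :
    (∀ i, 0 < d i) ∧ (∏ i, d i) = 1 ∧
      (0 < (∏ k, g k) ^ ((1 : ℝ) / K)) ∧
      Matrix.diagonal g *ᵥ d = ((∏ k, g k) ^ ((1 : ℝ) / K)) • fun i => 1 / d i := by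
  have hP : 0 < ∏ k, g k := Finset.prod_pos fun i _ => hg i
  have hK' : (K : ℝ) ≠ 0 := by exact_mod_cast hK.ne'
  have hpos : ∀ i, 0 < d i := fun i => by
    rw [hd]
    exact mul_pos (Real.rpow_pos_of_pos hP _) (Real.rpow_pos_of_pos (hg i) _)
  refine ⟨hpos, ?_, Real.rpow_pos_of_pos hP _, ?_⟩
  · rw [hd, Finset.prod_mul_distrib, Finset.prod_const, Finset.card_univ, Fintype.card_fin,
      Real.finsetProd_rpow _ _ fun i _ => (hg i).le, ← Real.rpow_natCast, ← Real.rpow_mul hP.le,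
      ← Real.rpow_add hP]
    have : (1 : ℝ) / (2 * K) * K + -(1 : ℝ) / 2 = 0 := by field_simp; norm_num
    rw [this, Real.rpow_zero]
  · ext i
    have hsq : d i * d i = (∏ k, g k) ^ ((1 : ℝ) / K) * (g i)⁻¹ := by
      rw [hd]
      dsimp only
      rw [mul_mul_mul_comm, ← Real.rpow_add hP, ← Real.rpow_add (hg i),
        ← Real.rpow_neg_one (g i)]
      congr 2
      · field_simp; norm_num
      · norm_num
    rw [Matrix.mulVec_diagonal, Pi.smul_apply, smul_eq_mul, mul_one_div,
      eq_div_iff (hpos i).ne', mul_assoc, hsq, mul_comm, mul_assoc, inv_mul_cancel₀ (hg i).ne',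
      mul_one]
end

section
/- Let K be a positive integer and let G ∈ ℝ^{K×K} be invertible with G^{-1} entrywise nonnegative. Let d ∈ ℝ^K have all entries positive, set w = G^{-1}(1 ⊘ d), and note every entry of w is positive. Define the scaling factor ϑ(x) = (∏_{i=1}^K x_i)^{-1/K} for entrywise positive x, the normalization Γ(x) = ϑ(x) x, and let C = diag(d)^{-1}. Then d = Γ(G^{-1}(1 ⊘ d)) holds if and only if the matrix B = ϑ(G^{-1} C 1) · C G^{-1} C satisfies B · 1 = 1 (i.e., B is row stochastic: every row sums to one). -/
open Matrix

/-- (Theorem 4) With `G` invertible, `G⁻¹` entrywise nonnegative,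
`d` entrywise positive, `w = G⁻¹(1 ⊘ d)` entrywise positive,
`ϑ(x) = (∏ xᵢ)^{-1/K}`, `Γ(x) = ϑ(x) x`, and `C = diag(d)⁻¹`, the fixed-point
equation `d = Γ(G⁻¹(1 ⊘ d))` holds iff the matrix
`B = ϑ(G⁻¹ C 1) · C G⁻¹ C` is row stochastic, i.e. `B 1 = 1`. -/
theorem fixed_point_iff_row_stochastic
    (K : ℕ) (hK : 0 < K) (G : Matrix (Fin K) (Fin K) ℝ) (hG : IsUnit G)
    (hGinv : ∀ i j, 0 ≤ G⁻¹ i j)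
    (d : Fin K → ℝ) (hd : ∀ i, 0 < d i)
    (hw : ∀ i, 0 < (G⁻¹ *ᵥ fun j => 1 / d j) i) :
    (d = ((∏ i, (G⁻¹ *ᵥ fun j => 1 / d j) i) ^ (-(1 : ℝ) / K)) •
        (G⁻¹ *ᵥ fun j => 1 / d j))
      ↔
    ((((∏ i, ((G⁻¹ * (Matrix.diagonal d)⁻¹) *ᵥ fun _ => (1 : ℝ)) i) ^ (-(1 : ℝ) / K)) •
        ((Matrix.diagonal d)⁻¹ * G⁻¹ * (Matrix.diagonal d)⁻¹)) *ᵥ (fun _ => (1 : ℝ)) =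
      fun _ => (1 : ℝ)) := by
  -- With `C = diag(d)⁻¹` we have `C 1 = 1 ⊘ d`, so every term is expressed through
  -- `w = G⁻¹(1 ⊘ d)`, and the claim becomes `d = ϑ(w) w ↔ ϑ(w) C w = 1`, which holds
  -- coordinatewise because each `d i` is nonzero.
  have hC : (Matrix.diagonal d)⁻¹ = Matrix.diagonal fun j => 1 / d j := by
    refine Matrix.inv_eq_right_inv ?_
    rw [Matrix.diagonal_mul_diagonal, ← Matrix.diagonal_one]
    congr 1
    funext i
    exact mul_one_div_cancel (hd i).ne'
  have hC1 : (Matrix.diagonal d)⁻¹ *ᵥ (fun _ => (1 : ℝ)) = fun j => 1 / d j := by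
    funext i
    rw [hC, Matrix.mulVec_diagonal, mul_one]
  rw [Matrix.smul_mulVec, Matrix.mul_assoc, ← Matrix.mulVec_mulVec, ← Matrix.mulVec_mulVec,
    ← Matrix.mulVec_mulVec, hC1, hC]
  generalize (G⁻¹ *ᵥ fun j => 1 / d j) = w
  generalize (∏ i, w i) ^ (-(1 : ℝ) / K) = t
  rw [funext_iff, funext_iff]
  refine forall_congr' fun i => ?_
  rw [Pi.smul_apply, Pi.smul_apply, Matrix.mulVec_diagonal, smul_eq_mul, smul_eq_mul,
    mul_left_comm, one_div_mul_eq_div, div_eq_one_iff_eq (hd i).ne', eq_comm]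
end

section
/- Let K ≥ 2, let M ∈ ℝ^{K×K} be symmetric and satisfy vᵀ M v ≥ φ ‖v‖² for all v ∈ ℝ^K, with φ > 0, let A ∈ ℤ^{K×K} have rank K, let d ∈ ℝ^K have all entries positive with ∏_{i=1}^K d_i = 1, and set D = diag(d). If Tr(Aᵀ D M D A) ≤ C₀ for some C₀ > 0, then for every j ∈ {1,…,K}: d_j ≤ (C₀/φ)^{1/2} and d_j ≥ (φ/C₀)^{(K−1)/2}. -/
/-!
Writing `B` for `A` as a real matrix and `D = diag d`, the diagonal entries of `Bᵀ D M D B` are the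
values of the quadratic form of `M` at the columns of `D B`, so coercivity gives
`φ ∑ₗ ∑ᵢ (dᵢ aᵢₗ)² ≤ C₀`. Since `A` has full rank, no row of `A` vanishes; being integral, row `j`
has an entry of absolute value at least `1`, and hence `φ dⱼ² ≤ C₀`, which is the upper bound.
The lower bound follows from `1 = dⱼ ∏_{i ≠ j} dᵢ` and the upper bound on the other `K - 1` factors.
-/

open Matrix

theorem trace_eq_sum_quadratic_form {n : Type*} [Fintype n] [DecidableEq n]
    (M B : Matrix n n ℝ) (d : n → ℝ) :
    Matrix.trace (Bᵀ * Matrix.diagonal d * M * Matrix.diagonal d * B) =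
      ∑ l, (fun i => d i * B i l) ⬝ᵥ M *ᵥ (fun i => d i * B i l) := by
  have h : Bᵀ * Matrix.diagonal d * M * Matrix.diagonal d * B =
      (Matrix.diagonal d * B)ᵀ * (M * (Matrix.diagonal d * B)) := by
    simp only [Matrix.transpose_mul, Matrix.diagonal_transpose, Matrix.mul_assoc]
  rw [h, Matrix.trace]
  refine Finset.sum_congr rfl fun l _ => ?_
  rw [Matrix.diag_apply, Matrix.mul_apply]
  refine Finset.sum_congr rfl fun i _ => ?_
  rw [Matrix.transpose_apply, Matrix.diagonal_mul, Matrix.mul_apply]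
  simp only [Matrix.mulVec, dotProduct, Matrix.diagonal_mul]

theorem exists_ne_zero_of_rank_eq {K : ℕ} (B : Matrix (Fin K) (Fin K) ℝ) (hB : B.rank = K)
    (j : Fin K) : ∃ l, B j l ≠ 0 := by
  have h : LinearIndependent ℝ B.row := by
    rw [linearIndependent_iff_card_eq_finrank_span, Set.finrank, ← Matrix.rank_eq_finrank_span_row,
      hB, Fintype.card_fin]
  exact Function.ne_iff.mp (h.ne_zero j)

/-- Boundedness step in the proof of finiteness of the solution
set: if `M` is symmetric with `vᵀ M v ≥ φ ‖v‖²` (`φ > 0`), `A` is a full-rank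
integer matrix, `d` is entrywise positive with `∏ dᵢ = 1`, `D = diag d`, and
`Tr(Aᵀ D M D A) ≤ C₀`, then `dⱼ ≤ (C₀/φ)^{1/2}` and
`dⱼ ≥ (φ/C₀)^{(K-1)/2}` for every `j`. -/
theorem solution_set_bounded
    (K : ℕ) (hK : 2 ≤ K)
    (M : Matrix (Fin K) (Fin K) ℝ) (hMsym : M.IsSymm)
    (φ : ℝ) (hφ : 0 < φ)
    (hM : ∀ v : Fin K → ℝ, φ * (∑ i, v i ^ 2) ≤ v ⬝ᵥ M *ᵥ v)
    (A : Matrix (Fin K) (Fin K) ℤ)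
    (hA : (A.map (fun z : ℤ => (z : ℝ))).rank = K)
    (d : Fin K → ℝ) (hd : ∀ i, 0 < d i) (hprod : (∏ i, d i) = 1)
    (C₀ : ℝ) (hC₀ : 0 < C₀)
    (htr : Matrix.trace ((A.map (fun z : ℤ => (z : ℝ)))ᵀ * Matrix.diagonal d * M *
        Matrix.diagonal d * (A.map (fun z : ℤ => (z : ℝ)))) ≤ C₀) :
    ∀ j, d j ≤ (C₀ / φ) ^ ((1 : ℝ) / 2) ∧ (φ / C₀) ^ (((K : ℝ) - 1) / 2) ≤ d j := by
  set B := A.map (fun z : ℤ => (z : ℝ)) with hBdef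
  have hratio : 0 < C₀ / φ := div_pos hC₀ hφ
  have hupper : ∀ j, d j ≤ (C₀ / φ) ^ ((1 : ℝ) / 2) := by
    intro j
    obtain ⟨l, hl⟩ := exists_ne_zero_of_rank_eq B hA j
    -- Integrality turns a nonzero entry into one of absolute value at least `1`.
    have hB1 : 1 ≤ B j l ^ 2 := by
      have hAne : A j l ≠ 0 := fun h => hl (by simp [hBdef, h])
      have hsq : 0 < A j l ^ 2 := by positivity
      have h1 : (1 : ℤ) ≤ A j l ^ 2 := hsq
      simp only [hBdef, Matrix.map_apply]
      exact_mod_cast h1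
    have hcoercive : φ * ∑ l, ∑ i, (d i * B i l) ^ 2 ≤ C₀ := by
      refine le_trans ?_ htr
      rw [trace_eq_sum_quadratic_form, Finset.mul_sum]
      exact Finset.sum_le_sum fun l _ => hM _
    have hentry : (d j * B j l) ^ 2 ≤ ∑ l, ∑ i, (d i * B i l) ^ 2 :=
      (Finset.single_le_sum (f := fun i => (d i * B i l) ^ 2)
        (fun i _ => sq_nonneg _) (Finset.mem_univ j)).trans
      (Finset.single_le_sum (f := fun l => ∑ i, (d i * B i l) ^ 2)
        (fun l _ => Finset.sum_nonneg fun i _ => sq_nonneg _) (Finset.mem_univ l))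
    have hdsq : d j ^ 2 ≤ (d j * B j l) ^ 2 := by
      rw [mul_pow]
      exact le_mul_of_one_le_right (sq_nonneg _) hB1
    rw [← Real.sqrt_eq_rpow]
    apply Real.le_sqrt_of_sq_le
    rw [le_div_iff₀' hφ]
    exact (mul_le_mul_of_nonneg_left (hdsq.trans hentry) hφ.le).trans hcoercive
  intro j
  refine ⟨hupper j, ?_⟩
  have hothers : ∏ i ∈ Finset.univ.erase j, d i ≤ (C₀ / φ) ^ (((K : ℝ) - 1) / 2) := by
    calc ∏ i ∈ Finset.univ.erase j, d i
        ≤ ∏ _i ∈ Finset.univ.erase j, (C₀ / φ) ^ ((1 : ℝ) / 2) :=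
          Finset.prod_le_prod (fun i _ => (hd i).le) fun i _ => hupper i
      _ = (C₀ / φ) ^ (((K : ℝ) - 1) / 2) := by
          rw [Finset.prod_const, Finset.card_erase_of_mem (Finset.mem_univ j), Finset.card_univ,
            Fintype.card_fin, ← Real.rpow_natCast, ← Real.rpow_mul hratio.le,
            Nat.cast_sub (by lia), Nat.cast_one]
          congr 1
          ring
  rw [← inv_div, Real.inv_rpow hratio.le, inv_le_iff_one_le_mul₀ (by positivity)]
  calc (1 : ℝ) = d j * ∏ i ∈ Finset.univ.erase j, d i := by
        rw [Finset.mul_prod_erase _ d (Finset.mem_univ j), hprod]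
    _ ≤ d j * (C₀ / φ) ^ (((K : ℝ) - 1) / 2) := mul_le_mul_of_nonneg_left hothers (hd j).le
end

section
/- Let K be a positive integer and let G ∈ ℝ^{K×K} be symmetric positive definite. Then the function d ↦ dᵀ G d attains its minimum on the set Ω = {d ∈ ℝ^K : d_i > 0 for all i, ∏_{i=1}^K d_i = 1}; i.e., there exists d* ∈ Ω such that (d*)ᵀ G d* ≤ dᵀ G d for all d ∈ Ω. -/
/-!
Positive definiteness makes the quadratic form coercive: by compactness of the unit sphere and
homogeneity, `dᵀ G d ≥ c ‖d‖²` with `c > 0` (`exists_pos_mul_norm_sq_le`). The set `Ω` is closed,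
since a point with nonnegative coordinates and product `1` has no zero coordinate, so it is also
`{d : ∀ i, dᵢ ≥ 0, ∏ᵢ dᵢ = 1}`. A continuous coercive function attains its minimum on a nonempty
closed set.
-/

open Matrix

/-- Coercivity of a positive definite form. The norm is the sup norm of `ι → ℝ`; any norm
would do. -/
theorem exists_pos_mul_norm_sq_le {ι : Type*} [Fintype ι] [Nonempty ι]
    (G : Matrix ι ι ℝ) (hG : G.PosDef) :
    ∃ c : ℝ, 0 < c ∧ ∀ d : ι → ℝ, c * ‖d‖ ^ 2 ≤ d ⬝ᵥ (G *ᵥ d) := by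
  have hcont : Continuous fun d : ι → ℝ => d ⬝ᵥ (G *ᵥ d) := by fun_prop
  obtain ⟨u, hu, hmin⟩ := (isCompact_sphere (0 : ι → ℝ) 1).exists_isMinOn
    (NormedSpace.sphere_nonempty.2 zero_le_one) hcont.continuousOn
  have hu0 : u ≠ 0 := ne_zero_of_mem_unit_sphere ⟨u, hu⟩
  refine ⟨u ⬝ᵥ (G *ᵥ u), by simpa using hG.dotProduct_mulVec_pos hu0, fun d => ?_⟩
  rcases eq_or_ne d 0 with rfl | hd
  · simp
  have hn : 0 < ‖d‖ := norm_pos_iff.2 hd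
  have h := isMinOn_iff.1 hmin (‖d‖⁻¹ • d) (by simp [norm_smul, hn.ne'])
  simp only [mulVec_smul, smul_dotProduct, dotProduct_smul, smul_eq_mul] at h
  calc u ⬝ᵥ (G *ᵥ u) * ‖d‖ ^ 2 ≤ (‖d‖⁻¹ * (‖d‖⁻¹ * (d ⬝ᵥ (G *ᵥ d)))) * ‖d‖ ^ 2 := by gcongr
    _ = d ⬝ᵥ (G *ᵥ d) := by field_simp

/-- For a symmetric positive definite `G`, the quadratic form
`d ↦ dᵀ G d` attains its minimum on
`Ω = {d : ∀ i, dᵢ > 0, ∏ᵢ dᵢ = 1}`. -/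
theorem quadratic_form_attains_min_on_unit_product
    (K : ℕ) (hK : 0 < K) (G : Matrix (Fin K) (Fin K) ℝ) (hG : G.PosDef) :
    ∃ dstar : Fin K → ℝ,
      ((∀ i, 0 < dstar i) ∧ (∏ i, dstar i) = 1) ∧
      ∀ d : Fin K → ℝ, (∀ i, 0 < d i) → (∏ i, d i) = 1 →
        dstar ⬝ᵥ (G *ᵥ dstar) ≤ d ⬝ᵥ (G *ᵥ d) := by
  have : Nonempty (Fin K) := ⟨⟨0, hK⟩⟩
  obtain ⟨c, hc, hcoer⟩ := exists_pos_mul_norm_sq_le G hG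
  let f : (Fin K → ℝ) → ℝ := fun d => d ⬝ᵥ (G *ᵥ d)
  have hcont : Continuous f := by fun_prop
  let s : Set (Fin K → ℝ) := {d | (∀ i, 0 ≤ d i) ∧ ∏ i, d i = 1}
  have hs : IsClosed s := by
    refine IsClosed.inter (s₁ := {d : Fin K → ℝ | ∀ i, 0 ≤ d i}) ?_
      (isClosed_eq (by fun_prop) continuous_const)
    simp only [Set.ofPred_forall]
    exact isClosed_iInter fun i => isClosed_le continuous_const (continuous_apply i)
  have hlim : Filter.Tendsto f (Filter.cocompact _) Filter.atTop :=
    Filter.tendsto_atTop_mono hcoer <|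
      ((Filter.tendsto_pow_atTop two_ne_zero).comp
        (tendsto_norm_cocompact_atTop (E := Fin K → ℝ))).const_mul_atTop hc
  obtain ⟨d₀, ⟨hnonneg, hprod⟩, hmin⟩ := hcont.continuousOn.exists_isMinOn' hs
    (x₀ := fun _ => 1) (by simp [s])
    ((hlim.eventually_ge_atTop (f fun _ => 1)).filter_mono inf_le_left)
  refine ⟨d₀, ⟨fun i => (hnonneg i).lt_of_ne' fun h => ?_, hprod⟩, fun d hd hd1 =>
    isMinOn_iff.1 hmin d ⟨fun i => (hd i).le, hd1⟩⟩
  rw [Finset.prod_eq_zero (Finset.mem_univ i) h] at hprod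
  exact zero_ne_one hprod
end

section
/- Let K be a positive integer. For an invertible matrix G ∈ ℝ^{K×K}, let Λ(G) = {G z : z ∈ ℤ^K} and define λ_K(G) = inf { r ∈ ℝ : there exist linearly independent v_1, …, v_K ∈ Λ(G) with ‖v_i‖ ≤ r for all i } (the K-th successive minimum). Let G_A ∈ ℝ^{K×K} be invertible, let D ∈ ℝ^{K×K} be an invertible diagonal matrix, set G_B = G_A D, and let U ∈ ℤ^{K×K} be unimodular (det U = ±1) such that ‖G_B U e_i‖ ≤ λ_K(G_B) for all i ∈ {1,…,K} (i.e., the columns of G_B U solve the shortest independent vector problem for Λ(G_B)). Then for every i, ‖G_A U e_i‖ ≤ λ_K(G_A) + |λ_K(G_A) − λ_K(G_B)| + ‖G_A‖₂ · ‖D − I‖₂ · ‖U e_i‖, where ‖·‖₂ denotes the operator norm induced by the Euclidean vector norm and e_i is the i-th standard basis vector. -/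
/-!
Writing `u = U eᵢ`, the identity `G_A u = G_A D u - G_A (D - I) u` and the triangle inequality give
`‖G_A u‖ ≤ ‖G_B u‖ + ‖G_A‖₂ ‖D - I‖₂ ‖u‖`. The first term is at most `λ_K(G_B)` by hypothesis, and
`λ_K(G_B) ≤ λ_K(G_A) + |λ_K(G_A) - λ_K(G_B)|`. The only analytic input is `euclNorm_mulVec_le`,
the bound `‖M x‖ ≤ ‖M‖₂ ‖x‖` for the supremum `specNorm`, which needs the quotients
`‖M x‖ / ‖x‖` to be bounded above.
-/


open Matrix

/-- Euclidean norm of a vector in `ℝ^K`. -/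
noncomputable def euclNorm {K : ℕ} (x : Fin K → ℝ) : ℝ :=
  Real.sqrt (∑ i, x i ^ 2)

/-- The lattice `Λ(G) = {G z : z ∈ ℤ^K}` generated by the matrix `G`. -/
def latticeOf {K : ℕ} (G : Matrix (Fin K) (Fin K) ℝ) : Set (Fin K → ℝ) :=
  Set.range (fun z : Fin K → ℤ => G *ᵥ fun i => (z i : ℝ))

/-- The `K`-th successive minimum `λ_K(G)` of the lattice `Λ(G)`. -/
noncomputable def lambdaK {K : ℕ} (G : Matrix (Fin K) (Fin K) ℝ) : ℝ :=
  sInf {r : ℝ | ∃ v : Fin K → (Fin K → ℝ), LinearIndependent ℝ v ∧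
    (∀ i, v i ∈ latticeOf G) ∧ ∀ i, euclNorm (v i) ≤ r}

/-- The spectral norm (operator norm induced by the Euclidean vector norm). -/
noncomputable def specNorm {K : ℕ} (M : Matrix (Fin K) (Fin K) ℝ) : ℝ :=
  sSup {c : ℝ | ∃ x : Fin K → ℝ, x ≠ 0 ∧ c = euclNorm (M *ᵥ x) / euclNorm x}

theorem euclNorm_eq_norm {K : ℕ} (x : Fin K → ℝ) : euclNorm x = ‖WithLp.toLp 2 x‖ := by
  simp [euclNorm, EuclideanSpace.norm_eq]

theorem euclNorm_sub_le {K : ℕ} (x y : Fin K → ℝ) :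
    euclNorm (x - y) ≤ euclNorm x + euclNorm y := by
  simpa only [euclNorm_eq_norm, WithLp.toLp_sub] using
    norm_sub_le (WithLp.toLp 2 x) (WithLp.toLp 2 y)

/-- The operator norm of `M` on `EuclideanSpace` bounds the quotients defining `specNorm M`, so the
supremum is not a junk value. -/
theorem bddAbove_specNorm_set {K : ℕ} (M : Matrix (Fin K) (Fin K) ℝ) :
    BddAbove {c : ℝ | ∃ x : Fin K → ℝ, x ≠ 0 ∧ c = euclNorm (M *ᵥ x) / euclNorm x} := by
  refine ⟨‖Matrix.toEuclideanCLM (n := Fin K) (𝕜 := ℝ) M‖, ?_⟩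
  rintro c ⟨x, -, rfl⟩
  have h := (Matrix.toEuclideanCLM (n := Fin K) (𝕜 := ℝ) M).ratio_le_opNorm (WithLp.toLp 2 x)
  rwa [Matrix.toEuclideanCLM_toLp, ← euclNorm_eq_norm, ← euclNorm_eq_norm] at h

theorem specNorm_nonneg {K : ℕ} (M : Matrix (Fin K) (Fin K) ℝ) : 0 ≤ specNorm M := by
  refine Real.sSup_nonneg ?_
  rintro c ⟨x, -, rfl⟩
  exact div_nonneg (Real.sqrt_nonneg _) (Real.sqrt_nonneg _)

theorem euclNorm_mulVec_le {K : ℕ} (M : Matrix (Fin K) (Fin K) ℝ) (x : Fin K → ℝ) :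
    euclNorm (M *ᵥ x) ≤ specNorm M * euclNorm x := by
  rcases eq_or_ne x 0 with rfl | hx
  · simp [euclNorm]
  · have hpos : 0 < euclNorm x := by
      rw [euclNorm_eq_norm, norm_pos_iff]
      simpa using hx
    rw [← div_le_iff₀ hpos]
    exact le_csSup (bddAbove_specNorm_set M) ⟨x, hx, rfl⟩

/-- (Quantitative content of Theorem 1.) If the columns of
`G_B U` (with `G_B = G_A D`, `D` invertible diagonal, `U` unimodular) solve the
SIVP for `Λ(G_B)`, then each column `G_A U eᵢ` is a near-SIVP solution for
`Λ(G_A)`: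
`‖G_A U eᵢ‖ ≤ λ_K(G_A) + |λ_K(G_A) − λ_K(G_B)| + ‖G_A‖₂ ‖D − I‖₂ ‖U eᵢ‖`. -/
theorem sivp_perturbation_bound
    (K : ℕ) (hK : 0 < K)
    (GA D : Matrix (Fin K) (Fin K) ℝ) (hGA : IsUnit GA)
    (hDdiag : D.IsDiag) (hD : IsUnit D)
    (U : Matrix (Fin K) (Fin K) ℤ) (hU : U.det = 1 ∨ U.det = -1)
    (hSIVP : ∀ i : Fin K,
      euclNorm ((GA * D * U.map (fun z : ℤ => (z : ℝ))) *ᵥ Pi.single i 1) ≤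
        lambdaK (GA * D)) :
    ∀ i : Fin K,
      euclNorm ((GA * U.map (fun z : ℤ => (z : ℝ))) *ᵥ Pi.single i 1) ≤
        lambdaK GA + |lambdaK GA - lambdaK (GA * D)| +
          specNorm GA * specNorm (D - 1) *
            euclNorm ((U.map (fun z : ℤ => (z : ℝ))) *ᵥ Pi.single i 1) := by
  intro i
  have hB := hSIVP i
  rw [← Matrix.mulVec_mulVec] at hB ⊢
  set u := (U.map (fun z : ℤ => (z : ℝ))) *ᵥ Pi.single i 1
  have hsplit : GA *ᵥ u = (GA * D) *ᵥ u - GA *ᵥ ((D - 1) *ᵥ u) := by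
    rw [Matrix.mulVec_mulVec u GA (D - 1), ← Matrix.sub_mulVec, Matrix.mul_sub, Matrix.mul_one,
      sub_sub_cancel]
  have hpert : euclNorm (GA *ᵥ ((D - 1) *ᵥ u)) ≤ specNorm GA * specNorm (D - 1) * euclNorm u := by
    rw [mul_assoc]
    exact (euclNorm_mulVec_le _ _).trans
      (mul_le_mul_of_nonneg_left (euclNorm_mulVec_le _ _) (specNorm_nonneg GA))
  have htri := euclNorm_sub_le ((GA * D) *ᵥ u) (GA *ᵥ ((D - 1) *ᵥ u))
  rw [← hsplit] at htri
  have habs := neg_abs_le (lambdaK GA - lambdaK (GA * D))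
  linarith
end

section
/- Let K, N be positive integers, Ĥ ∈ ℝ^{K×N}, C ∈ ℝ^{K×K}, σ_h > 0, σ_e > 0, and set β = σ_h²/(σ_h² + σ_e²) and σ_ξ² = σ_h² σ_e²/(σ_h² + σ_e²). Then the matrix β Ĥ Ĥᵀ + K σ_e² I_K is invertible and P* = Ĥᵀ ( β Ĥ Ĥᵀ + K σ_e² I_K )^{-1} C is the unique minimizer over P ∈ ℝ^{N×K} of the function g(P) = ‖β Ĥ P − C‖_F² + K σ_ξ² ‖P‖_F². -/
/-!
The objective is a quadratic function of `P`, so completing the square around any `P₀` gives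
`g(P₀ + D) = g(P₀) + ‖β Ĥ D‖² + K σ_ξ² ‖D‖² + 2 ⟨D, G(P₀)⟩`
with `G(P₀) = β Ĥᵀ (β Ĥ P₀ - C) + K σ_ξ² P₀` half the gradient (`mlObjective_add`).
Since `σ_ξ² = β σ_e²`, the candidate `P* = Ĥᵀ M⁻¹ C` with `M = β Ĥ Ĥᵀ + K σ_e² I` satisfies
`β Ĥ P* - C = -K σ_e² M⁻¹ C`, whence `G(P*) = 0` (`mlObjective_gradient_eq_zero`).
The excess over `g(P*)` is therefore at least `K σ_ξ² ‖D‖²`, which gives both minimality and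
uniqueness. The matrix `M` is invertible because it is positive definite.
-/

open Matrix

/-- The ML-robust objective `g(P) = ‖β Ĥ P − C‖_F² + K σ_ξ² ‖P‖_F²`
(with `‖M‖_F² = Tr(Mᵀ M)`). -/
noncomputable def mlObjective {K N : ℕ} (Hh : Matrix (Fin K) (Fin N) ℝ)
    (C : Matrix (Fin K) (Fin K) ℝ) (β σξsq : ℝ) (P : Matrix (Fin N) (Fin K) ℝ) : ℝ :=
  Matrix.trace ((β • (Hh * P) - C)ᵀ * (β • (Hh * P) - C)) +
    (K : ℝ) * σξsq * Matrix.trace (Pᵀ * P)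

/-- The candidate minimizer `P* = Ĥᵀ (β Ĥ Ĥᵀ + K σ_e² I)⁻¹ C`. -/
noncomputable def mlMinimizer {K N : ℕ} (Hh : Matrix (Fin K) (Fin N) ℝ)
    (C : Matrix (Fin K) (Fin K) ℝ) (β σesq : ℝ) : Matrix (Fin N) (Fin K) ℝ :=
  Hhᵀ * (β • (Hh * Hhᵀ) + ((K : ℝ) * σesq) • (1 : Matrix (Fin K) (Fin K) ℝ))⁻¹ * C

lemma trace_transpose_mul_self_nonneg {m n : ℕ} (A : Matrix (Fin m) (Fin n) ℝ) :
    0 ≤ trace (Aᵀ * A) := by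
  simp only [trace, diag_apply, mul_apply, transpose_apply]
  exact Finset.sum_nonneg fun _ _ => Finset.sum_nonneg fun _ _ => mul_self_nonneg _

lemma trace_transpose_mul_self_add {m n : ℕ} (A B : Matrix (Fin m) (Fin n) ℝ) :
    trace ((A + B)ᵀ * (A + B)) =
      trace (Aᵀ * A) + trace (Bᵀ * B) + 2 * trace (Bᵀ * A) := by
  have h : trace (Aᵀ * B) = trace (Bᵀ * A) := by
    rw [← trace_transpose, transpose_mul, transpose_transpose]
  simp only [transpose_add, Matrix.add_mul, Matrix.mul_add, trace_add, h]
  ring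

/-- Second-order expansion of the objective; the linear term pairs the displacement `D` with half
the gradient at `P`. -/
lemma mlObjective_add {K N : ℕ} (Hh : Matrix (Fin K) (Fin N) ℝ)
    (C : Matrix (Fin K) (Fin K) ℝ) (β s : ℝ) (P D : Matrix (Fin N) (Fin K) ℝ) :
    mlObjective Hh C β s (P + D) = mlObjective Hh C β s P +
      trace ((β • (Hh * D))ᵀ * (β • (Hh * D))) + (K : ℝ) * s * trace (Dᵀ * D) +
      2 * trace (Dᵀ * (β • (Hhᵀ * (β • (Hh * P) - C)) + ((K : ℝ) * s) • P)) := by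
  have h : β • (Hh * (P + D)) - C = (β • (Hh * P) - C) + β • (Hh * D) := by
    rw [Matrix.mul_add, smul_add]
    abel
  have hc : trace ((β • (Hh * D))ᵀ * (β • (Hh * P) - C)) =
      trace (Dᵀ * (β • (Hhᵀ * (β • (Hh * P) - C)))) := by
    rw [transpose_smul, transpose_mul, Matrix.smul_mul, Matrix.mul_smul, Matrix.mul_assoc]
  unfold mlObjective
  rw [h, trace_transpose_mul_self_add, trace_transpose_mul_self_add, hc, Matrix.mul_add,
    trace_add, Matrix.mul_smul Dᵀ ((K : ℝ) * s), trace_smul, smul_eq_mul]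
  ring

/-- The candidate minimizer is a stationary point of the objective with `σ_ξ² = β σ_e²`. -/
lemma mlObjective_gradient_eq_zero {K N : ℕ} (Hh : Matrix (Fin K) (Fin N) ℝ)
    (C : Matrix (Fin K) (Fin K) ℝ) (β σesq : ℝ)
    (hM : IsUnit (β • (Hh * Hhᵀ) + ((K : ℝ) * σesq) • (1 : Matrix (Fin K) (Fin K) ℝ))) :
    β • (Hhᵀ * (β • (Hh * mlMinimizer Hh C β σesq) - C)) +
      ((K : ℝ) * (β * σesq)) • mlMinimizer Hh C β σesq = 0 := by
  unfold mlMinimizer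
  set M := β • (Hh * Hhᵀ) + ((K : ℝ) * σesq) • (1 : Matrix (Fin K) (Fin K) ℝ) with hMdef
  have hinv : M * (M⁻¹ * C) = C := by
    rw [← Matrix.mul_assoc, mul_nonsing_inv _ ((isUnit_iff_isUnit_det M).mp hM), Matrix.one_mul]
  -- The residual `β Ĥ P* - C` collapses because `β Ĥ Ĥᵀ = M - K σ_e² I`.
  have hres : β • (Hh * (Hhᵀ * M⁻¹ * C)) - C = -(((K : ℝ) * σesq) • (M⁻¹ * C)) := by
    have h1 : M * (M⁻¹ * C) =
        β • (Hh * (Hhᵀ * M⁻¹ * C)) + ((K : ℝ) * σesq) • (M⁻¹ * C) := by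
      conv_lhs => rw [hMdef]
      rw [Matrix.add_mul, Matrix.smul_mul, Matrix.smul_mul, Matrix.one_mul]
      simp only [Matrix.mul_assoc, ← hMdef]
    rw [hinv] at h1
    nth_rewrite 2 [h1]
    abel
  rw [hres, Matrix.mul_neg, Matrix.mul_smul, smul_neg, smul_smul, Matrix.mul_assoc,
    show β * ((K : ℝ) * σesq) = (K : ℝ) * (β * σesq) by ring, neg_add_cancel]

/-- (Theorem 8, DIF case.) With `β = σ_h²/(σ_h² + σ_e²)` and
`σ_ξ² = σ_h² σ_e²/(σ_h² + σ_e²)`, the matrix `β Ĥ Ĥᵀ + K σ_e² I_K` is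
invertible and `P* = Ĥᵀ (β Ĥ Ĥᵀ + K σ_e² I_K)⁻¹ C` is the unique minimizer of
`g(P) = ‖β Ĥ P − C‖_F² + K σ_ξ² ‖P‖_F²` over `P ∈ ℝ^{N×K}`. -/
theorem ml_robust_unique_minimizer
    (K N : ℕ) (hK : 0 < K) (hN : 0 < N)
    (Hh : Matrix (Fin K) (Fin N) ℝ) (C : Matrix (Fin K) (Fin K) ℝ)
    (σh σe : ℝ) (hσh : 0 < σh) (hσe : 0 < σe) :
    IsUnit ((σh ^ 2 / (σh ^ 2 + σe ^ 2)) • (Hh * Hhᵀ) +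
        ((K : ℝ) * σe ^ 2) • (1 : Matrix (Fin K) (Fin K) ℝ)) ∧
    (∀ P : Matrix (Fin N) (Fin K) ℝ,
      mlObjective Hh C (σh ^ 2 / (σh ^ 2 + σe ^ 2))
          (σh ^ 2 * σe ^ 2 / (σh ^ 2 + σe ^ 2))
          (mlMinimizer Hh C (σh ^ 2 / (σh ^ 2 + σe ^ 2)) (σe ^ 2)) ≤
        mlObjective Hh C (σh ^ 2 / (σh ^ 2 + σe ^ 2))
          (σh ^ 2 * σe ^ 2 / (σh ^ 2 + σe ^ 2)) P) ∧
    (∀ P : Matrix (Fin N) (Fin K) ℝ,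
      mlObjective Hh C (σh ^ 2 / (σh ^ 2 + σe ^ 2))
          (σh ^ 2 * σe ^ 2 / (σh ^ 2 + σe ^ 2)) P =
        mlObjective Hh C (σh ^ 2 / (σh ^ 2 + σe ^ 2))
          (σh ^ 2 * σe ^ 2 / (σh ^ 2 + σe ^ 2))
          (mlMinimizer Hh C (σh ^ 2 / (σh ^ 2 + σe ^ 2)) (σe ^ 2)) →
        P = mlMinimizer Hh C (σh ^ 2 / (σh ^ 2 + σe ^ 2)) (σe ^ 2)) := by
  have hK0 : (0 : ℝ) < K := by exact_mod_cast hK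
  have hs : σh ^ 2 * σe ^ 2 / (σh ^ 2 + σe ^ 2) =
      σh ^ 2 / (σh ^ 2 + σe ^ 2) * σe ^ 2 := by ring
  have hβ : 0 < σh ^ 2 / (σh ^ 2 + σe ^ 2) := by positivity
  rw [hs]
  set β := σh ^ 2 / (σh ^ 2 + σe ^ 2)
  have hM : IsUnit (β • (Hh * Hhᵀ) +
      ((K : ℝ) * σe ^ 2) • (1 : Matrix (Fin K) (Fin K) ℝ)) := by
    have h1 : (Hh * Hhᵀ).PosSemidef := by
      simpa [conjTranspose_eq_transpose_of_trivial] using posSemidef_self_mul_conjTranspose Hh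
    have h2 : (((K : ℝ) * σe ^ 2) • (1 : Matrix (Fin K) (Fin K) ℝ)).PosDef :=
      PosDef.one.smul (by positivity)
    exact (PosDef.posSemidef_add (h1.smul hβ.le) h2).isUnit
  have hc : 0 < (K : ℝ) * (β * σe ^ 2) := by positivity
  have key : ∀ P : Matrix (Fin N) (Fin K) ℝ,
      mlObjective Hh C β (β * σe ^ 2) (mlMinimizer Hh C β (σe ^ 2)) +
        (K : ℝ) * (β * σe ^ 2) * trace ((P - mlMinimizer Hh C β (σe ^ 2))ᵀ *
          (P - mlMinimizer Hh C β (σe ^ 2))) ≤ mlObjective Hh C β (β * σe ^ 2) P := by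
    intro P
    have h := mlObjective_add Hh C β (β * σe ^ 2) (mlMinimizer Hh C β (σe ^ 2))
      (P - mlMinimizer Hh C β (σe ^ 2))
    rw [mlObjective_gradient_eq_zero Hh C β (σe ^ 2) hM, Matrix.mul_zero, trace_zero,
      add_sub_cancel] at h
    have := trace_transpose_mul_self_nonneg (β • (Hh * (P - mlMinimizer Hh C β (σe ^ 2))))
    linarith
  refine ⟨hM, fun P => ?_, fun P hP => ?_⟩
  · have := mul_nonneg hc.le
      (trace_transpose_mul_self_nonneg (P - mlMinimizer Hh C β (σe ^ 2)))
    linarith [key P]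
  · have h0 := trace_transpose_mul_self_nonneg (P - mlMinimizer Hh C β (σe ^ 2))
    have h1 : trace ((P - mlMinimizer Hh C β (σe ^ 2))ᵀ *
        (P - mlMinimizer Hh C β (σe ^ 2))) = 0 := by
      have h2 := key P
      rw [hP] at h2
      refine le_antisymm (nonpos_of_mul_nonpos_right ?_ hc) h0
      linarith
    rw [← conjTranspose_eq_transpose_of_trivial, trace_conjTranspose_mul_self_eq_zero_iff] at h1
    exact sub_eq_zero.mp h1
end
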